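/- arXiv:2508.14091 — 5 statements merged into one kernel-verified Lean document; each statement's English description precedes it below -/
import Mathlib

section
/- For every d ≥ 1 and every vector r ∈ ℝ^d, the TransE scoring function f(h, t) = −‖h + r − t‖₂ is not monotonically increasing: there exist vectors h, h', t, t' ∈ ℝ^d with 0 ≤ h[i] ≤ h'[i] and 0 ≤ t[i] ≤ t'[i] for every index i such that f(h, t) > f(h', t'). -/
/-- For every `d ≥ 1` and every `r ∈ ℝ^d`, the TransE scoring function
`f(h, t) = -‖h + r - t‖₂` is not monotonically increasing. -/
theorem transE_not_monotonically_increasing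
    (d : ℕ) (hd : 1 ≤ d) (r : EuclideanSpace ℝ (Fin d)) :
    ∃ h h' t t' : EuclideanSpace ℝ (Fin d),
      (∀ i, 0 ≤ h i ∧ h i ≤ h' i) ∧
      (∀ i, 0 ≤ t i ∧ t i ≤ t' i) ∧
      -‖h + r - t‖ > -‖h' + r - t'‖ := by
  refine ⟨WithLp.toLp 2 (fun i => |r i|), WithLp.toLp 2 (fun i => |r i| + 1),
    WithLp.toLp 2 (fun i => |r i| + r i), WithLp.toLp 2 (fun i => |r i| + r i), ?_, ?_, ?_⟩
  · intro i
    simp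
  · intro i
    refine ⟨?_, le_refl _⟩
    have := neg_abs_le (r i)
    simp only
    linarith
  · have h1 : (WithLp.toLp 2 (fun i => |r i|) : EuclideanSpace ℝ (Fin d)) + r
        - WithLp.toLp 2 (fun i => |r i| + r i) = 0 := by
      ext i
      simp
    rw [h1, norm_zero, neg_zero, gt_iff_lt, neg_lt_zero, norm_pos_iff]
    intro h
    have h2 := congrArg (fun v : EuclideanSpace ℝ (Fin d) => v ⟨0, hd⟩) h
    simp only [PiLp.sub_apply, PiLp.add_apply, PiLp.zero_apply] at h2
    linarith
end

section
/- Let d and k be natural numbers, let M¹, M², M³ be k×d real matrices and w ∈ ℝ^k and r ∈ ℝ^d be vectors, all with non-negative entries, and let σ : ℝ → ℝ be monotonically increasing with non-negative range. Then the MLP scoring function f(h, t) = wᵀ σ(M¹ h + M² r + M³ t), with σ applied componentwise, is monotonically increasing: for all vectors h, h', t, t' ∈ ℝ^d with 0 ≤ h[i] ≤ h'[i] and 0 ≤ t[i] ≤ t'[i] for every index i, one has f(h, t) ≤ f(h', t'). -/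
/-- The MLP scoring function `f(h, t) = wᵀ σ(M¹ h + M² r + M³ t)`,
with all parameters non-negative and `σ` monotonically increasing with
non-negative range, is monotonically increasing. -/
theorem mlp_monotonically_increasing
    (d k : ℕ) (M1 M2 M3 : Matrix (Fin k) (Fin d) ℝ)
    (w : Fin k → ℝ) (r : Fin d → ℝ)
    (hM1 : ∀ i j, 0 ≤ M1 i j) (hM2 : ∀ i j, 0 ≤ M2 i j) (hM3 : ∀ i j, 0 ≤ M3 i j)
    (hw : ∀ i, 0 ≤ w i) (hr : ∀ i, 0 ≤ r i)
    (σ : ℝ → ℝ) (hσ : Monotone σ) (hσ0 : ∀ x, 0 ≤ σ x)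
    (h h' t t' : Fin d → ℝ)
    (hh : ∀ i, 0 ≤ h i ∧ h i ≤ h' i)
    (ht : ∀ i, 0 ≤ t i ∧ t i ≤ t' i) :
    ∑ m, w m * σ (M1.mulVec h m + M2.mulVec r m + M3.mulVec t m)
      ≤ ∑ m, w m * σ (M1.mulVec h' m + M2.mulVec r m + M3.mulVec t' m) := by
  refine Finset.sum_le_sum fun m _ => mul_le_mul_of_nonneg_left (hσ ?_) (hw m)
  have h1 : M1.mulVec h m ≤ M1.mulVec h' m := by
    simp only [Matrix.mulVec, dotProduct]
    exact Finset.sum_le_sum fun j _ => mul_le_mul_of_nonneg_left (hh j).2 (hM1 m j)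
  have h3 : M3.mulVec t m ≤ M3.mulVec t' m := by
    simp only [Matrix.mulVec, dotProduct]
    exact Finset.sum_le_sum fun j _ => mul_le_mul_of_nonneg_left (ht j).2 (hM3 m j)
  linarith
end

section
/- Let d and k be natural numbers, let T : Fin k × Fin d × Fin d → ℝ be a third-order tensor, let M¹, M² be k×d real matrices, let r, b ∈ ℝ^k be vectors, all with non-negative entries, and let σ : ℝ → ℝ be monotonically increasing with non-negative range. Then the NTN scoring function f(h, t) = Σ_{m=1}^{k} r[m] · σ( Σ_{i,j} T[m, i, j]·h[i]·t[j] + (M¹ h)[m] + (M² t)[m] + b[m] ) is monotonically increasing: for all vectors h, h', t, t' ∈ ℝ^d with 0 ≤ h[i] ≤ h'[i] and 0 ≤ t[i] ≤ t'[i] for every index i, one has f(h, t) ≤ f(h', t'). -/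
/-- The NTN scoring function
`f(h, t) = rᵀ σ(hᵀ T t + M¹ h + M² t + b)`, with all parameters non-negative
and `σ` monotonically increasing with non-negative range, is monotonically
increasing. -/
theorem ntn_monotonically_increasing
    (d k : ℕ) (T : Fin k → Fin d → Fin d → ℝ)
    (M1 M2 : Matrix (Fin k) (Fin d) ℝ) (r b : Fin k → ℝ)
    (hT : ∀ m i j, 0 ≤ T m i j)
    (hM1 : ∀ i j, 0 ≤ M1 i j) (hM2 : ∀ i j, 0 ≤ M2 i j)
    (hr : ∀ m, 0 ≤ r m) (hb : ∀ m, 0 ≤ b m)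
    (σ : ℝ → ℝ) (hσ : Monotone σ) (hσ0 : ∀ x, 0 ≤ σ x)
    (h h' t t' : Fin d → ℝ)
    (hh : ∀ i, 0 ≤ h i ∧ h i ≤ h' i)
    (ht : ∀ i, 0 ≤ t i ∧ t i ≤ t' i) :
    ∑ m, r m * σ ((∑ i, ∑ j, T m i j * h i * t j) + M1.mulVec h m + M2.mulVec t m + b m)
      ≤ ∑ m, r m * σ ((∑ i, ∑ j, T m i j * h' i * t' j) + M1.mulVec h' m + M2.mulVec t' m + b m) := by
  refine Finset.sum_le_sum fun m _ => mul_le_mul_of_nonneg_left (hσ ?_) (hr m)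
  have h1 : (∑ i, ∑ j, T m i j * h i * t j) ≤ ∑ i, ∑ j, T m i j * h' i * t' j :=
    Finset.sum_le_sum fun i _ => Finset.sum_le_sum fun j _ =>
      mul_le_mul (mul_le_mul_of_nonneg_left (hh i).2 (hT m i j)) (ht j).2 (ht j).1
        (mul_nonneg (hT m i j) ((hh i).1.trans (hh i).2))
  have h2 : M1.mulVec h m ≤ M1.mulVec h' m := by
    simp only [Matrix.mulVec, dotProduct]
    exact Finset.sum_le_sum fun i _ => mul_le_mul_of_nonneg_left (hh i).2 (hM1 m i)
  have h3 : M2.mulVec t m ≤ M2.mulVec t' m := by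
    simp only [Matrix.mulVec, dotProduct]
    exact Finset.sum_le_sum fun i _ => mul_le_mul_of_nonneg_left (ht i).2 (hM2 m i)
  linarith
end

section
/- Let N be a monotonic max-sum GNN with L layers over a finite colour set Col and dimensions δ_0, …, δ_L. Let G and G' be finite Col-edge-coloured graphs with vertex sets V and V', decidable edge relations E^c ⊆ V × V and E'^c ⊆ V' × V' for each c ∈ Col, and initial labels λ_0 : V → ℝ^{δ_0} and λ'_0 : V' → ℝ^{δ_0} whose entries are all non-negative. Suppose ι : V → V' is an injective map such that for all c ∈ Col and u, v ∈ V, (u, v) ∈ E^c implies (ι u, ι v) ∈ E'^c, and λ_0(v)[j] ≤ λ'_0(ι v)[j] for all v ∈ V and all j. Then for every layer 0 ≤ ℓ ≤ L, every vertex v ∈ V and every index j ∈ {1, …, δ_ℓ}, the labels computed by N satisfy λ_ℓ(v)[j] ≤ λ'_ℓ(ι v)[j]. -/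
/-- Sum of the `min k |S|` largest elements of the multiset `S`. -/
noncomputable def maxKSum (k : ℕ) (S : Multiset ℝ) : ℝ :=
  ((S.sort (· ≤ ·)).reverse.take k).sum

/-- `max-k-sum` where the aggregation parameter `k` may be a natural number or `∞`;
`max-∞-sum` sums all elements. -/
noncomputable def maxKSumE (k : ℕ∞) (S : Multiset ℝ) : ℝ :=
  maxKSum (min k (Multiset.card S : ℕ∞)).toNat S

/-- A max-sum GNN with `L` layers over a colour set `Col` and dimensions `δ 0, …, δ L`:
matrices `A ℓ`, `B ℓ c ∈ ℝ^{δ(ℓ+1) × δ ℓ}`, bias vectors `bias ℓ ∈ ℝ^{δ(ℓ+1)}`,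
activation functions `act ℓ : ℝ → ℝ` and aggregation parameters `agg ℓ ∈ ℕ ∪ {∞}`. -/
structure MaxSumGNN (Col : Type) (L : ℕ) (δ : ℕ → ℕ) where
  A : ∀ ℓ : Fin L, Matrix (Fin (δ (ℓ.1 + 1))) (Fin (δ ℓ.1)) ℝ
  B : ∀ ℓ : Fin L, Col → Matrix (Fin (δ (ℓ.1 + 1))) (Fin (δ ℓ.1)) ℝ
  bias : ∀ ℓ : Fin L, Fin (δ (ℓ.1 + 1)) → ℝ
  act : Fin L → ℝ → ℝ
  agg : Fin L → ℕ∞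

/-- A max-sum GNN is monotonic if all entries of all matrices `A ℓ`, `B ℓ c` are
non-negative and every activation function is monotonically increasing with
non-negative range. -/
def MaxSumGNN.Monotonic {Col : Type} {L : ℕ} {δ : ℕ → ℕ} (N : MaxSumGNN Col L δ) : Prop :=
  (∀ ℓ i j, 0 ≤ N.A ℓ i j) ∧ (∀ ℓ c i j, 0 ≤ N.B ℓ c i j) ∧
  (∀ ℓ, Monotone (N.act ℓ) ∧ ∀ x, 0 ≤ N.act ℓ x)

/-- The vertex labels `λ_ℓ(v)` computed by a max-sum GNN applied to a finite
`Col`-edge-coloured graph with edge relations `E c` and initial labels `lam0`: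
`λ_ℓ(v) = σ_ℓ(b_ℓ + A_ℓ λ_{ℓ-1}(v) + Σ_c B_ℓ^c a_ℓ^c(v))` where the `j`-th
component of `a_ℓ^c(v)` is the `max-k_ℓ-sum` of `⦃λ_{ℓ-1}(u)[j] : (v,u) ∈ E^c⦄`. -/
noncomputable def MaxSumGNN.label {Col : Type} [Fintype Col] {L : ℕ} {δ : ℕ → ℕ}
    (N : MaxSumGNN Col L δ) {V : Type} [Fintype V]
    (E : Col → V → V → Prop) [∀ c u v, Decidable (E c u v)]
    (lam0 : V → Fin (δ 0) → ℝ) :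
    (ℓ : ℕ) → ℓ ≤ L → V → Fin (δ ℓ) → ℝ
  | 0, _, v => lam0 v
  | (ℓ + 1), hℓ, v => fun i =>
      N.act ⟨ℓ, hℓ⟩ (N.bias ⟨ℓ, hℓ⟩ i
        + (N.A ⟨ℓ, hℓ⟩).mulVec (N.label E lam0 ℓ (Nat.le_of_succ_le hℓ) v) i
        + ∑ c : Col, (N.B ⟨ℓ, hℓ⟩ c).mulVec
            (fun j => maxKSumE (N.agg ⟨ℓ, hℓ⟩)
              ((Finset.univ.filter (fun u => E c v u)).val.map
                (fun u => N.label E lam0 ℓ (Nat.le_of_succ_le hℓ) u j))) i)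

theorem sum_le_take_sum (l : List ℝ) (hl : l.Pairwise (· ≥ ·)) (h0 : ∀ x ∈ l, 0 ≤ x) :
    ∀ (k : ℕ) (m : List ℝ), m.Sublist l → m.length ≤ k → m.sum ≤ (l.take k).sum := by
  induction l with
  | nil =>
    intro k m hm _
    simp [List.sublist_nil.1 hm]
  | cons a t ih =>
    intro k m hm hk
    rw [List.pairwise_cons] at hl
    cases m with
    | nil =>
      simp only [List.sum_nil]
      exact List.sum_nonneg (fun x hx => h0 x (List.mem_of_mem_take hx))
    | cons b m' =>
      cases k with
      | zero => simp at hk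
      | succ k =>
        have hb : b ≤ a := by
          have : b ∈ a :: t := hm.subset (by simp)
          rcases List.mem_cons.1 this with h | h
          · exact h.le
          · exact hl.1 b h
        have hm' : m'.Sublist t := by simpa using hm.tail
        have := ih hl.2 (fun x hx => h0 x (by simp [hx])) k m' hm' (by simpa using hk)
        simp only [List.take_succ_cons, List.sum_cons]
        linarith

theorem le_maxKSum (k : ℕ) (T M : Multiset ℝ) (h0 : ∀ x ∈ T, 0 ≤ x) (hM : M ≤ T)
    (hk : M.card ≤ k) : M.sum ≤ maxKSum k T := by
  have hs : (T.sort (· ≤ ·)).reverse.Pairwise (· ≥ ·) := by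
    rw [List.pairwise_reverse]
    exact Multiset.pairwise_sort T (· ≤ ·)
  have hT : (((T.sort (· ≤ ·)).reverse : List ℝ) : Multiset ℝ) = T := by
    simp
  induction M using Quotient.inductionOn with
  | h m =>
    rw [← hT] at hM
    obtain ⟨m', hp, hsub⟩ := hM
    have := sum_le_take_sum _ hs (fun x hx => h0 x (by simpa using hx)) k m' hsub
      (by rw [hp.length_eq]; simpa using hk)
    rw [hp.sum_eq] at this
    simpa [maxKSum] using this

theorem exists_sub_map {α : Type} (f : α → ℝ) (X : Multiset α) :
    ∀ M : Multiset ℝ, M ≤ X.map f → ∃ Y ≤ X, Y.map f = M := by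
  induction X using Quotient.inductionOn with
  | h l =>
    intro M
    induction M using Quotient.inductionOn with
    | h m =>
      rintro ⟨m', hp, hsub⟩
      obtain ⟨l', hl', rfl⟩ := List.sublist_map_iff.1 hsub
      exact ⟨(l' : Multiset α), hl'.subperm, Quot.sound hp⟩

theorem maxKSumE_mono {V V' : Type} (k : ℕ∞) (X : Multiset V) (X' : Multiset V')
    (ι : V → V') (hX : X.map ι ≤ X') (f : V → ℝ) (f' : V' → ℝ)
    (h0 : ∀ v, 0 ≤ f' v) (hf : ∀ v, f v ≤ f' (ι v)) :
    maxKSumE k (X.map f) ≤ maxKSumE k (X'.map f') := by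
  set n := (min k ((X.map f).card : ℕ∞)).toNat with hn
  set M : Multiset ℝ := ((((X.map f).sort (· ≤ ·)).reverse.take n : List ℝ) : Multiset ℝ) with hMdef
  have hM : M ≤ X.map f := by
    have h1 : M ≤ ((((X.map f).sort (· ≤ ·)).reverse : List ℝ) : Multiset ℝ) :=
      (List.take_sublist _ _).subperm
    simpa using h1
  have hMs : maxKSumE k (X.map f) = M.sum := by
    simp [maxKSumE, maxKSum, hMdef, hn]
  have hMc : M.card ≤ n := by
    simp [hMdef]
  obtain ⟨Y, hY, hYM⟩ := exists_sub_map f X M hM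
  have hcard : X.card ≤ X'.card := by simpa using Multiset.card_le_card hX
  have hnn : n ≤ (min k ((X'.map f').card : ℕ∞)).toNat := by
    apply ENat.toNat_le_toNat
    · apply min_le_min le_rfl
      simpa using hcard
    · exact ne_top_of_le_ne_top (ENat.natCast_ne_top _) (min_le_right _ _)
  rw [hMs, ← hYM]
  calc (Y.map f).sum ≤ (Y.map (fun v => f' (ι v))).sum := Multiset.sum_map_le_sum_map _ _ (fun v _ => hf v)
    _ = ((Y.map ι).map f').sum := by rw [Multiset.map_map]; rfl
    _ ≤ _ := by
      apply le_maxKSum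
      · intro x hx
        obtain ⟨v, _, rfl⟩ := Multiset.mem_map.1 hx
        exact h0 v
      · exact Multiset.map_le_map ((Multiset.map_le_map hY).trans hX)
      · refine le_trans ?_ (hMc.trans hnn)
        simp [← hYM]

theorem label_nonneg {Col : Type} [Fintype Col] {L : ℕ} {δ : ℕ → ℕ}
    (N : MaxSumGNN Col L δ) (hN : N.Monotonic) {V : Type} [Fintype V]
    (E : Col → V → V → Prop) [∀ c u v, Decidable (E c u v)]
    (lam0 : V → Fin (δ 0) → ℝ) (h : ∀ v j, 0 ≤ lam0 v j) :
    ∀ (ℓ : ℕ) (hℓ : ℓ ≤ L) (v : V) (j : Fin (δ ℓ)), 0 ≤ N.label E lam0 ℓ hℓ v j := by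
  intro ℓ hℓ v j
  cases ℓ with
  | zero => simpa [MaxSumGNN.label] using h v j
  | succ ℓ =>
    rw [MaxSumGNN.label]
    exact (hN.2.2 _).2 _

theorem mulVec_mono_aux {m n : ℕ} (A : Matrix (Fin m) (Fin n) ℝ) (hA : ∀ i j, 0 ≤ A i j)
    (x y : Fin n → ℝ) (h : ∀ j, x j ≤ y j) (i : Fin m) : A.mulVec x i ≤ A.mulVec y i := by
  simp only [Matrix.mulVec, dotProduct]
  exact Finset.sum_le_sum fun j _ => mul_le_mul_of_nonneg_left (h j) (hA i j)

/-- monotonicity of a monotonic max-sum GNN under injective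
homomorphisms of edge-coloured graphs with non-negative, pointwise-dominated
initial labels: every computed label on `G` is dominated by the corresponding
label on `G'`. -/
theorem maxSumGNN_label_monotone
    {Col : Type} [Fintype Col] {L : ℕ} {δ : ℕ → ℕ}
    (N : MaxSumGNN Col L δ) (hN : N.Monotonic)
    {V V' : Type} [Fintype V] [Fintype V']
    (E : Col → V → V → Prop) [∀ c u v, Decidable (E c u v)]
    (E' : Col → V' → V' → Prop) [∀ c u v, Decidable (E' c u v)]
    (lam0 : V → Fin (δ 0) → ℝ) (lam0' : V' → Fin (δ 0) → ℝ)
    (hlam0 : ∀ v j, 0 ≤ lam0 v j) (hlam0' : ∀ v j, 0 ≤ lam0' v j)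
    (ι : V → V') (hι : Function.Injective ι)
    (hE : ∀ c u v, E c u v → E' c (ι u) (ι v))
    (hle : ∀ v j, lam0 v j ≤ lam0' (ι v) j) :
    ∀ (ℓ : ℕ) (hℓ : ℓ ≤ L) (v : V) (j : Fin (δ ℓ)),
      N.label E lam0 ℓ hℓ v j ≤ N.label E' lam0' ℓ hℓ (ι v) j := by
  intro ℓ
  induction ℓ with
  | zero =>
    intro _ v j
    simpa [MaxSumGNN.label] using hle v j
  | succ ℓ ih =>
    intro hℓ v i
    rw [MaxSumGNN.label, MaxSumGNN.label]
    apply (hN.2.2 _).1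
    refine add_le_add (add_le_add le_rfl ?_) ?_
    · exact mulVec_mono_aux _ (hN.1 ⟨ℓ, hℓ⟩) _ _ (fun j => ih _ v j) i
    · refine Finset.sum_le_sum fun c _ =>
        mulVec_mono_aux _ (hN.2.1 ⟨ℓ, hℓ⟩ c) _ _ (fun j => ?_) i
      apply maxKSumE_mono _ _ _ ι
      · rw [Multiset.le_iff_subset ((Finset.nodup _).map hι)]
        intro x hx
        obtain ⟨u, hu, rfl⟩ := Multiset.mem_map.1 hx
        have hu' : E c v u := by simpa using hu
        simpa using hE c v u hu'
      · exact fun u => label_nonneg N hN E' lam0' hlam0' _ _ u j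
      · exact fun u => ih _ u j
end

section
/- Let d be a natural number, let M be a d×d real matrix with non-negative entries, let t_f ∈ ℝ, and let w > 0, ε > 0, α > 0 be real numbers with α·w·ε ≥ t_f and such that every nonzero entry of M is at least w. Let h, h', t, t' ∈ ℝ^d satisfy 0 ≤ h'[i] ≤ h[i] and 0 ≤ t'[j] ≤ t[j] for all i, j, such that every nonzero coordinate of h' and every nonzero coordinate of t' is at least ε, and such that for every i either h[i] = h'[i] or h'[i] ≥ α, and for every j either t[j] = t'[j] or t'[j] ≥ α. Then hᵀ M t ≥ t_f if and only if h'ᵀ M t' ≥ t_f. -/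
/-- decoding-level content of the capacity theorem: with `w` a
lower bound on the nonzero entries of `M`, `ε` a lower bound on the nonzero
coordinates of `h'` and `t'`, and `α` the capacity bound with `α·w·ε ≥ t_f`,
the bilinear scores `hᵀ M t` and `h'ᵀ M t'` are above the threshold `t_f`
simultaneously. -/
theorem bilinear_score_threshold_iff_of_capacity
    (d : ℕ) (M : Matrix (Fin d) (Fin d) ℝ) (hM : ∀ i j, 0 ≤ M i j)
    (tf w ε α : ℝ) (hw : 0 < w) (hε : 0 < ε) (hα : 0 < α)
    (hcap : tf ≤ α * w * ε)
    (hMw : ∀ i j, M i j ≠ 0 → w ≤ M i j)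
    (h h' t t' : Fin d → ℝ)
    (hh : ∀ i, 0 ≤ h' i ∧ h' i ≤ h i)
    (ht : ∀ j, 0 ≤ t' j ∧ t' j ≤ t j)
    (hhε : ∀ i, h' i ≠ 0 → ε ≤ h' i)
    (htε : ∀ j, t' j ≠ 0 → ε ≤ t' j)
    (hhα : ∀ i, h i = h' i ∨ α ≤ h' i)
    (htα : ∀ j, t j = t' j ∨ α ≤ t' j) :
    (tf ≤ ∑ i, ∑ j, h i * M i j * t j ↔ tf ≤ ∑ i, ∑ j, h' i * M i j * t' j) := by
  have hle : ∀ i j, h' i * M i j * t' j ≤ h i * M i j * t j := by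
    intro i j
    have h1 := hh i
    have h2 := ht j
    have h3 := hM i j
    exact mul_le_mul (mul_le_mul_of_nonneg_right h1.2 h3) h2.2 h2.1
      (mul_nonneg (h1.1.trans h1.2) h3)
  constructor
  · intro H
    by_cases hall : ∀ i j, h i * M i j * t j = h' i * M i j * t' j
    · simpa only [hall] using H
    · push Not at hall
      obtain ⟨i, j, hne⟩ := hall
      have hnn : ∀ i j, 0 ≤ h' i * M i j * t' j := fun i j =>
        mul_nonneg (mul_nonneg (hh i).1 (hM i j)) (ht j).1
      have hM0 : M i j ≠ 0 := by
        intro h0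
        simp [h0] at hne
      have hMw' := hMw i j hM0
      have hh0 : h' i ≠ 0 := by
        intro h0
        rcases hhα i with h1 | h1
        · simp [h1, h0] at hne
        · linarith
      have ht0 : t' j ≠ 0 := by
        intro h0
        rcases htα j with h1 | h1
        · simp [h1, h0] at hne
        · linarith
      have key : α * w * ε ≤ h' i * M i j * t' j := by
        rcases hhα i with h1 | h1
        · rcases htα j with h2 | h2
          · simp [h1, h2] at hne
          · calc α * w * ε = ε * w * α := by ring
              _ ≤ _ := mul_le_mul (mul_le_mul (hhε i hh0) hMw' hw.le (hh i).1) h2 hα.le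
                (mul_nonneg (hh i).1 (hM i j))
        · exact mul_le_mul (mul_le_mul h1 hMw' hw.le (hh i).1) (htε j ht0) hε.le
            (mul_nonneg (hh i).1 (hM i j))
      have s1 : h' i * M i j * t' j ≤ ∑ j, h' i * M i j * t' j :=
        Finset.single_le_sum (f := fun j => h' i * M i j * t' j)
          (fun j _ => hnn i j) (Finset.mem_univ j)
      have s2 : ∑ j, h' i * M i j * t' j ≤ ∑ i, ∑ j, h' i * M i j * t' j :=
        Finset.single_le_sum (f := fun i => ∑ j, h' i * M i j * t' j)
          (fun i _ => Finset.sum_nonneg fun j _ => hnn i j) (Finset.mem_univ i)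
      linarith
  · intro H
    exact H.trans (Finset.sum_le_sum fun i _ => Finset.sum_le_sum fun j _ => hle i j)
end
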